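/- The map φ₅ is an order automorphism of (D, ⊑). Here φ₅ sends a digraph G to the digraph on the same vertex set obtained as follows: for every pair of distinct vertices u, v such that both u and v carry a loop and exactly one of the edges (u,v), (v,u) is present, reverse that edge; all loops and all other adjacencies are unchanged. φ₅ is well defined on isomorphism classes and so gives a map D → D. -/

import Mathlib

/-- A finite digraph: a finite nonempty vertex set `Fin n` with a (Bool-valued)
edge relation, loops allowed. -/
structure FinDigraph where
  n : ℕ
  pos : 0 < n
  adj : Fin n → Fin n → Bool

namespace FinDigraph

/-- Isomorphism of finite digraphs. -/
def Iso (G H : FinDigraph) : Prop :=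
  ∃ e : Fin G.n ≃ Fin H.n, ∀ u v, H.adj (e u) (e v) = G.adj u v

theorem iso_refl (G : FinDigraph) : Iso G G := ⟨Equiv.refl _, fun _ _ => rfl⟩

theorem iso_symm {G H : FinDigraph} (h : Iso G H) : Iso H G := by
  obtain ⟨e, he⟩ := h
  refine ⟨e.symm, fun u v => ?_⟩
  rw [← he (e.symm u) (e.symm v), e.apply_symm_apply, e.apply_symm_apply]

theorem iso_trans {G H K : FinDigraph} (hGH : Iso G H) (hHK : Iso H K) : Iso G K := by
  obtain ⟨e, he⟩ := hGH
  obtain ⟨f, hf⟩ := hHK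
  exact ⟨e.trans f, fun u v => (hf (e u) (e v)).trans (he u v)⟩

instance isoSetoid : Setoid FinDigraph :=
  ⟨Iso, iso_refl, fun h => iso_symm h, fun h h' => iso_trans h h'⟩

/-- `Emb G H` : `G` is isomorphic to an induced subdigraph of `H`. -/
def Emb (G H : FinDigraph) : Prop :=
  ∃ f : Fin G.n ↪ Fin H.n, ∀ u v, H.adj (f u) (f v) = G.adj u v

end FinDigraph

/-- `D`: the isomorphism classes of finite digraphs. -/
def D : Type := Quotient FinDigraph.isoSetoid

/-- The isomorphism class of a finite digraph. -/
def toD (G : FinDigraph) : D := Quotient.mk _ G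

/-- The substructure (induced subdigraph) ordering `⊑` on `D`. -/
instance : LE D :=
  ⟨fun x y => ∃ G H : FinDigraph, x = toD G ∧ y = toD H ∧ FinDigraph.Emb G H⟩

/-- An order automorphism: a bijection such that `x ≤ y ↔ f x ≤ f y`. -/
def IsOrderAuto {α : Type*} [LE α] (f : α → α) : Prop :=
  Function.Bijective f ∧ ∀ x y : α, x ≤ y ↔ f x ≤ f y

/-- φ₁ on digraphs: complement the loop status of every vertex. -/
def phi1Fn (G : FinDigraph) : FinDigraph :=
  ⟨G.n, G.pos, fun u v => if u = v then !(G.adj u v) else G.adj u v⟩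

/-- Edge reversal: transpose the edge relation. -/
def revFn (G : FinDigraph) : FinDigraph :=
  ⟨G.n, G.pos, fun u v => G.adj v u⟩

/-- φ₂ on digraphs: toggle both edges between distinct loopless vertices joined
by both or neither of the two possible edges. -/
def phi2Fn (G : FinDigraph) : FinDigraph :=
  ⟨G.n, G.pos, fun u v =>
    if u ≠ v ∧ G.adj u u = false ∧ G.adj v v = false ∧ G.adj u v = G.adj v u then
      !(G.adj u v)
    else G.adj u v⟩

/-- φ₃ on digraphs: toggle both edges between distinct looped vertices joined
by both or neither of the two possible edges. -/
def phi3Fn (G : FinDigraph) : FinDigraph :=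
  ⟨G.n, G.pos, fun u v =>
    if u ≠ v ∧ G.adj u u = true ∧ G.adj v v = true ∧ G.adj u v = G.adj v u then
      !(G.adj u v)
    else G.adj u v⟩

/-- φ₄ on digraphs: reverse the single edge between distinct loopless vertices
joined by exactly one of the two possible edges. -/
def phi4Fn (G : FinDigraph) : FinDigraph :=
  ⟨G.n, G.pos, fun u v =>
    if u ≠ v ∧ G.adj u u = false ∧ G.adj v v = false ∧ G.adj u v ≠ G.adj v u then
      G.adj v u
    else G.adj u v⟩

/-- φ₅ on digraphs: reverse the single edge between distinct looped vertices
joined by exactly one of the two possible edges. -/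
def phi5Fn (G : FinDigraph) : FinDigraph :=
  ⟨G.n, G.pos, fun u v =>
    if u ≠ v ∧ G.adj u u = true ∧ G.adj v v = true ∧ G.adj u v ≠ G.adj v u then
      G.adj v u
    else G.adj u v⟩

/-- φ_π on digraphs: for each ordered pair `(u,v)` of distinct vertices with a loop at
`u` and no loop at `v`, replace its type `(Adj(u,v), Adj(v,u)) : Bool × Bool` by `π`
applied to it; everything else is unchanged. -/
def phiPiFn (π : Equiv.Perm (Bool × Bool)) (G : FinDigraph) : FinDigraph :=
  ⟨G.n, G.pos, fun u v =>
    if u = v then G.adj u v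
    else if G.adj u u = true ∧ G.adj v v = false then (π (G.adj u v, G.adj v u)).1
    else if G.adj u u = false ∧ G.adj v v = true then (π (G.adj v u, G.adj u v)).2
    else G.adj u v⟩

/-- The number of vertices of an isomorphism class. -/
def nVerts : D → ℕ :=
  Quotient.lift (fun G : FinDigraph => G.n) (fun _ _ h => by
    obtain ⟨e, -⟩ := h
    simpa using Fintype.card_congr e)

/-- `Dn n`: the classes of digraphs with at most `n` vertices (first `n` levels). -/
def Dn (n : ℕ) : Set D := {x : D | nVerts x ≤ n}

theorem mem_Dn_succ {n : ℕ} {x : D} (h : x ∈ Dn n) : x ∈ Dn (n + 1) :=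
  le_trans h (Nat.le_succ n)

/-- The set of lower covers of `x` in `(D, ⊑)`. -/
def lcov (x : D) : Set D :=
  {y : D | y ≤ x ∧ y ≠ x ∧ ∀ z : D, y ≤ z → z ≤ x → z = y ∨ z = x}

/-- `scount x` = number of classes sharing the lower-cover set of `x`. -/
noncomputable def scount (x : D) : ℕ := Nat.card {y : D // lcov y = lcov x}

/-- `Hset m` = `{(l(G), s(G)) : G ∈ D with exactly m vertices}`. -/
def Hset (m : ℕ) : Set (Set D × ℕ) :=
  {p : Set D × ℕ | ∃ x : D, nVerts x = m ∧ p = (lcov x, scount x)}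

/-- Element-wise action of a map of `Dn n` on a subset of `Dn n`. -/
def setImage {n : ℕ} (φ : ↥(Dn n) → ↥(Dn n)) (S : Set D) : Set D :=
  {z : D | ∃ (y : D) (h : y ∈ Dn n), y ∈ S ∧ z = ↑(φ ⟨y, h⟩)}

/-- Element-wise action of a map of `Dn n` on a set of pairs `(S, k)`. -/
def HsetImage {n : ℕ} (φ : ↥(Dn n) → ↥(Dn n)) (A : Set (Set D × ℕ)) : Set (Set D × ℕ) :=
  {p : Set D × ℕ | ∃ q ∈ A, p = (setImage φ q.1, q.2)}

/-- The swap permutation `σ(a,b) = (b,a)` of `Bool × Bool`. -/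
def sigmaSwap : Equiv.Perm (Bool × Bool) := Equiv.prodComm Bool Bool

/-- Restrictions to `D₃` of order automorphisms of `(D, ⊑)`. -/
def Aut3D : Set (↥(Dn 3) → ↥(Dn 3)) :=
  {g | ∃ φ : D → D, IsOrderAuto φ ∧ ∀ x : ↥(Dn 3), (↑(g x) : D) = φ ↑x}

/-- Restrictions to `D₃` of order automorphisms of `D₄`. -/
def Aut3D4 : Set (↥(Dn 3) → ↥(Dn 3)) :=
  {g | ∃ ψ : ↥(Dn 4) → ↥(Dn 4), IsOrderAuto ψ ∧
    ∀ x : ↥(Dn 3), (↑(g x) : D) = ↑(ψ ⟨↑x, mem_Dn_succ x.2⟩)}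

/-- Restrictions to `D₃` of order automorphisms of `D₄`, as order isomorphisms of `D₃`. -/
def Aut3D4Iso : Set (↥(Dn 3) ≃o ↥(Dn 3)) :=
  {g | ∃ ψ : ↥(Dn 4) → ↥(Dn 4), IsOrderAuto ψ ∧
    ∀ x : ↥(Dn 3), ((g x : ↥(Dn 3)) : D) = ↑(ψ ⟨↑x, mem_Dn_succ x.2⟩)}

/-! Reversing the one-directional edges inside a set of vertices is the same as transposing the edge
relation there, since a pair joined by both or neither edge is symmetric. So `φ₅` transposes
the digraph on its looped vertices: whether an edge is flipped depends only on the loops at its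
ends, which makes `φ₅` compatible with induced subdigraphs, and loops are kept, which makes it an
involution. A monotone involution is an order automorphism. -/

theorem IsOrderAuto.of_involutive {α : Type*} [LE α] {f : α → α} (hf : Function.Involutive f)
    (hmono : ∀ ⦃x y⦄, x ≤ y → f x ≤ f y) : IsOrderAuto f := by
  refine ⟨hf.bijective, fun x y => ⟨fun h => hmono h, fun h => ?_⟩⟩
  simpa only [hf x, hf y] using hmono h

namespace FinDigraph

variable {G H : FinDigraph}

theorem Iso.emb (h : Iso G H) : Emb G H := by
  obtain ⟨e, he⟩ := h
  exact ⟨e.toEmbedding, he⟩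

theorem Emb.antisymm (hGH : Emb G H) (hHG : Emb H G) : Iso G H := by
  obtain ⟨f, hf⟩ := hGH
  obtain ⟨g, -⟩ := hHG
  have card_eq : Fintype.card (Fin G.n) = Fintype.card (Fin H.n) :=
    (Fintype.card_le_of_embedding f).antisymm (Fintype.card_le_of_embedding g)
  have f_bij : Function.Bijective f :=
    (Fintype.bijective_iff_injective_and_card f).2 ⟨f.injective, card_eq⟩
  exact ⟨Equiv.ofBijective f f_bij, hf⟩

end FinDigraph

/-- The map on isomorphism classes induced by a map of digraphs preserving embeddability. Such a map
respects isomorphism because digraphs that embed into each other are isomorphic. -/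
def D.map (T : FinDigraph → FinDigraph)
    (hT : ∀ ⦃G H⦄, FinDigraph.Emb G H → FinDigraph.Emb (T G) (T H)) : D → D :=
  Quotient.map T fun _ _ h =>
    (hT (FinDigraph.Iso.emb h)).antisymm (hT (FinDigraph.iso_symm h).emb)

namespace D

variable {T : FinDigraph → FinDigraph}
  (hT : ∀ ⦃G H⦄, FinDigraph.Emb G H → FinDigraph.Emb (T G) (T H))

theorem map_toD (G : FinDigraph) : map T hT (toD G) = toD (T G) := rfl

theorem map_le_map {x y : D} (hxy : x ≤ y) : map T hT x ≤ map T hT y := by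
  obtain ⟨G, H, rfl, rfl, h⟩ := hxy
  exact ⟨T G, T H, map_toD hT G, map_toD hT H, hT h⟩

theorem map_involutive (hinv : Function.Involutive T) : Function.Involutive (map T hT) := by
  rintro ⟨G⟩
  exact congrArg toD (hinv G)

theorem isOrderAuto_map_of_involutive (hinv : Function.Involutive T) :
    IsOrderAuto (map T hT) :=
  .of_involutive (map_involutive hT hinv) fun _ _ => map_le_map hT

end D

/-- The relation obtained from `a` by transposing it on the set of its looped points: `φ₅` as an
operation on edge relations, without the guards `u ≠ v` and `a u v ≠ a v u`. -/
def transposeLooped {V : Type*} (a : V → V → Bool) (u v : V) : Bool :=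
  if a u u = true ∧ a v v = true then a v u else a u v

section TransposeLooped

variable {V : Type*} (a : V → V → Bool)

theorem transposeLooped_self (u : V) : transposeLooped a u u = a u u :=
  ite_self _

theorem transposeLooped_involutive :
    Function.Involutive (transposeLooped : (V → V → Bool) → V → V → Bool) := by
  intro a
  funext u v
  rw [transposeLooped, transposeLooped_self, transposeLooped_self]
  by_cases hloops : a u u = true ∧ a v v = true
  · rw [if_pos hloops, transposeLooped, if_pos hloops.symm]
  · rw [if_neg hloops, transposeLooped, if_neg hloops]

theorem transposeLooped_apply_eq_ite_ne [DecidableEq V] (u v : V) :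
    transposeLooped a u v =
      if u ≠ v ∧ a u u = true ∧ a v v = true ∧ a u v ≠ a v u then a v u else a u v := by
  by_cases hsymm : a u v = a v u
  · simp [transposeLooped, hsymm]
  · have hne : u ≠ v := by
      rintro rfl
      exact hsymm rfl
    simp [transposeLooped, hsymm, hne]

end TransposeLooped

theorem phi5Fn_eq_transposeLooped (G : FinDigraph) :
    phi5Fn G = ⟨G.n, G.pos, transposeLooped G.adj⟩ :=
  congrArg (FinDigraph.mk G.n G.pos)
    (funext₂ fun u v => (transposeLooped_apply_eq_ite_ne G.adj u v).symm)

theorem phi5Fn_involutive : Function.Involutive phi5Fn := by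
  intro G
  simp only [phi5Fn_eq_transposeLooped, transposeLooped_involutive G.adj]

theorem FinDigraph.Emb.phi5Fn {G H : FinDigraph} (h : Emb G H) :
    Emb (phi5Fn G) (phi5Fn H) := by
  obtain ⟨f, hf⟩ := h
  simp only [phi5Fn_eq_transposeLooped]
  refine ⟨f, fun u v => ?_⟩
  simp only [transposeLooped, hf]

/-- φ₅ is well defined on isomorphism classes and is an order
automorphism of `(D, ⊑)`. -/
theorem phi5_isOrderAuto :
    ∃ φ : D → D, (∀ G : FinDigraph, φ (toD G) = toD (phi5Fn G)) ∧ IsOrderAuto φ :=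
  ⟨D.map phi5Fn fun _ _ => FinDigraph.Emb.phi5Fn, D.map_toD _,
    D.isOrderAuto_map_of_involutive _ phi5Fn_involutive⟩
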